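/- arXiv:1905.09269 — 3 statements merged into one kernel-verified Lean document; each statement's English description precedes it below -/
import Mathlib

section
/- Let n ≥ 1 and let X be a skew-symmetric n×n complex matrix (Xᵀ = −X). Then the trace of (ad X)⁶, viewed as a linear endomorphism of the Lie subalgebra 𝔰𝔬(n,ℂ) of skew-symmetric n×n complex matrices, equals (n − 32)·Tr(X⁶) + 15·Tr(X²)·Tr(X⁴). -/
open Matrix

noncomputable section

/-- The adjoint action `ad X : Y ↦ X·Y − Y·X` as a linear endomorphism of the matrix space. -/
def adM {m : Type*} [Fintype m] [DecidableEq m] (X : Matrix m m ℂ) :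
    Module.End ℂ (Matrix m m ℂ) :=
  LinearMap.mulLeft ℂ X - LinearMap.mulRight ℂ X

theorem adM_apply {m : Type*} [Fintype m] [DecidableEq m] (X Y : Matrix m m ℂ) :
    adM X Y = X * Y - Y * X := rfl

/-- The subspace `𝔰𝔬(n,ℂ)` of skew-symmetric `n×n` complex matrices. -/
def soSub (n : ℕ) : Submodule ℂ (Matrix (Fin n) (Fin n) ℂ) where
  carrier := {Y | Yᵀ = -Y}
  add_mem' := by
    intro a b ha hb
    simp only [Set.mem_setOf_eq] at *
    rw [Matrix.transpose_add, ha, hb, neg_add]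
  zero_mem' := by simp
  smul_mem' := by
    intro c a ha
    simp only [Set.mem_setOf_eq] at *
    rw [Matrix.transpose_smul, ha, smul_neg]

/-- For skew-symmetric `X`, `ad X` preserves `𝔰𝔬(n,ℂ)`. -/
theorem adM_mem_so {n : ℕ} {X : Matrix (Fin n) (Fin n) ℂ} (hX : Xᵀ = -X) :
    ∀ Y ∈ soSub n, adM X Y ∈ soSub n := by
  intro Y hY
  have hY' : Yᵀ = -Y := hY
  show (adM X Y)ᵀ = -(adM X Y)
  rw [adM_apply, Matrix.transpose_sub, Matrix.transpose_mul, Matrix.transpose_mul, hX, hY']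
  simp [Matrix.neg_mul, Matrix.mul_neg, neg_sub]

theorem aux_trace {n : ℕ} (f : Module.End ℂ (Matrix (Fin n) (Fin n) ℂ)) :
    LinearMap.trace ℂ _ f = ∑ i, ∑ j, (f (Matrix.single i j 1) : Matrix (Fin n) (Fin n) ℂ) i j := by
  rw [LinearMap.trace_eq_matrix_trace ℂ (Matrix.stdBasis ℂ (Fin n) (Fin n)), Matrix.trace,
    Fintype.sum_prod_type]
  refine Finset.sum_congr rfl fun i _ => Finset.sum_congr rfl fun j _ => ?_
  rw [Matrix.diag_apply, LinearMap.toMatrix_apply, Matrix.stdBasis_eq_single]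
  generalize f (Matrix.single i j 1) = Z
  simp [Matrix.stdBasis, Pi.basis_repr]

theorem aux_entry {n : ℕ} (A B : Matrix (Fin n) (Fin n) ℂ) (i j k l : Fin n) :
    (A * Matrix.single k l 1 * B : Matrix (Fin n) (Fin n) ℂ) i j = A i k * B l j := by
  rw [Matrix.mul_apply, Finset.sum_eq_single l]
  · simp
  · intro b _ hb
    simp [hb]
  · simp

theorem aux_sum1 {n : ℕ} (A B : Matrix (Fin n) (Fin n) ℂ) :
    ∑ i, ∑ j, (A * Matrix.single i j 1 * B : Matrix (Fin n) (Fin n) ℂ) i j = A.trace * B.trace := by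
  simp only [aux_entry, Matrix.trace, Matrix.diag_apply, Finset.sum_mul_sum]

theorem aux_sum2 {n : ℕ} (A B : Matrix (Fin n) (Fin n) ℂ) :
    ∑ i, ∑ j, (A * Matrix.single j i 1 * B : Matrix (Fin n) (Fin n) ℂ) i j = (A * Bᵀ).trace := by
  simp only [aux_entry]
  simp only [Matrix.trace, Matrix.diag_apply, Matrix.mul_apply, Matrix.transpose_apply]

theorem aux_pow {n : ℕ} (X Y : Matrix (Fin n) (Fin n) ℂ) :
    ((adM X) ^ 6) Y = X ^ 6 * Y * X ^ 0 - (6 : ℂ) • (X ^ 5 * Y * X ^ 1)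
      + (15 : ℂ) • (X ^ 4 * Y * X ^ 2) - (20 : ℂ) • (X ^ 3 * Y * X ^ 3)
      + (15 : ℂ) • (X ^ 2 * Y * X ^ 4) - (6 : ℂ) • (X ^ 1 * Y * X ^ 5) + X ^ 0 * Y * X ^ 6 := by
  simp only [pow_succ, pow_zero, one_mul, Module.End.mul_apply, Module.End.one_apply, adM_apply,
    mul_sub, sub_mul, mul_one, mul_assoc]
  module

/-- Projection onto skew matrices. -/
def skewProj (n : ℕ) : Matrix (Fin n) (Fin n) ℂ →ₗ[ℂ] soSub n where
  toFun Y := ⟨(2⁻¹ : ℂ) • (Y - Yᵀ), by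
    show ((2⁻¹ : ℂ) • (Y - Yᵀ))ᵀ = -((2⁻¹ : ℂ) • (Y - Yᵀ))
    rw [Matrix.transpose_smul, Matrix.transpose_sub, Matrix.transpose_transpose, ← smul_neg,
      neg_sub]⟩
  map_add' Y Z := by
    apply Subtype.ext
    simp only [Submodule.coe_add, Matrix.transpose_add]
    module
  map_smul' c Y := by
    apply Subtype.ext
    simp only [Submodule.coe_smul, Matrix.transpose_smul, RingHom.id_apply]
    module

theorem skewProj_coe {n : ℕ} (Y : Matrix (Fin n) (Fin n) ℂ) :
    ((skewProj n Y : soSub n) : Matrix (Fin n) (Fin n) ℂ) = (2⁻¹ : ℂ) • (Y - Yᵀ) := rfl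

theorem skewProj_of_mem {n : ℕ} (Y : soSub n) : skewProj n Y = Y := by
  apply Subtype.ext
  have h : (Y : Matrix (Fin n) (Fin n) ℂ)ᵀ = -Y := Y.2
  rw [skewProj_coe, h]
  module

theorem aux_odd {n : ℕ} {X : Matrix (Fin n) (Fin n) ℂ} (hX : Xᵀ = -X) (k : ℕ) (hk : Odd k) :
    (X ^ k).trace = 0 := by
  have h : (X ^ k).trace = -(X ^ k).trace := by
    conv_lhs => rw [← Matrix.trace_transpose, Matrix.transpose_pow, hX, hk.neg_pow,
      Matrix.trace_neg]
  exact self_eq_neg.mp h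

/-- For skew-symmetric `X`, the trace of `(ad X)⁶` on `𝔰𝔬(n,ℂ)` equals
`(n−32)·Tr(X⁶) + 15·Tr(X²)·Tr(X⁴)`. -/
theorem so_trace_ad_six (n : ℕ) (hn : 1 ≤ n) (X : Matrix (Fin n) (Fin n) ℂ) (hX : Xᵀ = -X) :
    LinearMap.trace ℂ ↥(soSub n) (((adM X).restrict (adM_mem_so hX)) ^ 6)
      = ((n : ℂ) - 32) * (X ^ 6).trace + 15 * (X ^ 2).trace * (X ^ 4).trace := by
  have h1 : ((adM X).restrict (adM_mem_so hX)) ^ 6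
      = skewProj n ∘ₗ (((adM X) ^ 6) ∘ₗ (soSub n).subtype) := by
    rw [Module.End.pow_restrict 6]
    apply LinearMap.ext
    intro Y
    rw [← skewProj_of_mem (((adM X ^ 6).restrict _) Y)]
    rfl
  rw [h1, LinearMap.trace_comp_comm', LinearMap.comp_assoc, aux_trace]
  have h2 : ∀ i j : Fin n, ((((adM X) ^ 6) ∘ₗ ((soSub n).subtype ∘ₗ skewProj n))
      (Matrix.single i j 1) : Matrix (Fin n) (Fin n) ℂ) i j = (2⁻¹ : ℂ) * (((((adM X) ^ 6) (Matrix.single i j 1)) : Matrix (Fin n) (Fin n) ℂ) i j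
        - ((((adM X) ^ 6) (Matrix.single j i 1)) : Matrix (Fin n) (Fin n) ℂ) i j) := by
    intro i j
    simp only [LinearMap.comp_apply, Submodule.subtype_apply, skewProj_coe, map_smul, map_sub,
      Matrix.transpose_single, Matrix.smul_apply, Matrix.sub_apply, smul_eq_mul]
  simp only [h2, aux_pow, Matrix.add_apply, Matrix.sub_apply, Matrix.smul_apply, smul_eq_mul,
    ← Finset.mul_sum, Finset.sum_add_distrib, Finset.sum_sub_distrib, aux_sum1, aux_sum2,
    Matrix.transpose_pow, hX]
  rw [aux_odd hX 1 (by decide), aux_odd hX 3 (by decide), aux_odd hX 5 (by decide)]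
  have e : ∀ k l : ℕ, X ^ k * (-X) ^ l = ((-1 : ℂ) ^ l) • X ^ (k + l) := by
    intro k l
    rw [← neg_one_smul ℂ X, smul_pow, Matrix.mul_smul, pow_add]
  simp only [e, Matrix.trace_smul, smul_eq_mul]
  have h0 : (X ^ 0).trace = (n : ℂ) := by simp
  rw [h0]
  norm_num
  ring

end
end

section
/- Let n ≥ 2. The identity 'for every skew-symmetric n×n complex matrix X, the trace of (ad X)⁶ on 𝔰𝔬(n,ℂ) equals 15·Tr(X²)·Tr(X⁴)' holds if and only if n = 32. -/
open Matrix

noncomputable section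

/-- The map `Y ↦ A Y B`. -/
def sandM {n : ℕ} (A B : Matrix (Fin n) (Fin n) ℂ) : Module.End ℂ (Matrix (Fin n) (Fin n) ℂ) :=
  LinearMap.mulLeft ℂ A ∘ₗ LinearMap.mulRight ℂ B

theorem sandM_apply {n : ℕ} (A B Y : Matrix (Fin n) (Fin n) ℂ) : sandM A B Y = A * (Y * B) := rfl

/-- Transposition as an endomorphism. -/
def trM (n : ℕ) : Module.End ℂ (Matrix (Fin n) (Fin n) ℂ) :=
  (Matrix.transposeLinearEquiv (Fin n) (Fin n) ℂ ℂ).toLinearMap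

theorem trM_apply {n : ℕ} (Y : Matrix (Fin n) (Fin n) ℂ) : trM n Y = Yᵀ := rfl

theorem trace_end_eq {n : ℕ} (f : Module.End ℂ (Matrix (Fin n) (Fin n) ℂ)) :
    LinearMap.trace ℂ _ f = ∑ i, ∑ j, f (Matrix.single i j 1) i j := by
  rw [LinearMap.trace_eq_matrix_trace ℂ (Matrix.stdBasis ℂ (Fin n) (Fin n)), Matrix.trace,
    Fintype.sum_prod_type]
  refine Finset.sum_congr rfl fun i _ => Finset.sum_congr rfl fun j _ => ?_
  rw [Matrix.diag_apply, LinearMap.toMatrix_apply, Matrix.stdBasis_eq_single]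
  rfl

theorem trace_sandM {n : ℕ} (A B : Matrix (Fin n) (Fin n) ℂ) :
    LinearMap.trace ℂ _ (sandM A B) = A.trace * B.trace := by
  rw [trace_end_eq, Matrix.trace, Matrix.trace, Finset.sum_mul_sum]
  refine Finset.sum_congr rfl fun i _ => Finset.sum_congr rfl fun j _ => ?_
  simp [sandM_apply, Matrix.mul_apply, Matrix.single_apply, ite_and]

theorem trace_sandM_trM {n : ℕ} (A B : Matrix (Fin n) (Fin n) ℂ) :
    LinearMap.trace ℂ _ (sandM A B ∘ₗ trM n) = (A * Bᵀ).trace := by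
  rw [trace_end_eq, Matrix.trace]
  refine Finset.sum_congr rfl fun i _ => ?_
  rw [Matrix.diag_apply, Matrix.mul_apply]
  refine Finset.sum_congr rfl fun j _ => ?_
  simp [sandM_apply, trM_apply, Matrix.mul_apply, Matrix.single_apply, ite_and]

theorem adM_pow_six {n : ℕ} (X : Matrix (Fin n) (Fin n) ℂ) :
    adM X ^ 6 = sandM (X ^ 6) (X ^ 0) - (6 : ℂ) • sandM (X ^ 5) (X ^ 1)
      + (15 : ℂ) • sandM (X ^ 4) (X ^ 2) - (20 : ℂ) • sandM (X ^ 3) (X ^ 3)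
      + (15 : ℂ) • sandM (X ^ 2) (X ^ 4) - (6 : ℂ) • sandM (X ^ 1) (X ^ 5)
      + sandM (X ^ 0) (X ^ 6) := by
  ext1 Y
  have h6 : (6 : ℂ) = ((6 : ℕ) : ℂ) := by norm_num
  have h15 : (15 : ℂ) = ((15 : ℕ) : ℂ) := by norm_num
  have h20 : (20 : ℂ) = ((20 : ℕ) : ℂ) := by norm_num
  rw [h6, h15, h20]
  simp only [Nat.cast_smul_eq_nsmul, LinearMap.add_apply, LinearMap.sub_apply,
    LinearMap.smul_apply, sandM_apply, pow_succ (adM X), pow_zero (adM X), one_mul,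
    Module.End.mul_apply, adM_apply]
  noncomm_ring

/-- The skew-symmetrisation as a map onto `soSub n`. -/
def skewP (n : ℕ) : Matrix (Fin n) (Fin n) ℂ →ₗ[ℂ] soSub n :=
  LinearMap.codRestrict (soSub n) ((1 / 2 : ℂ) • (LinearMap.id - trM n)) (by
    intro Y
    show ((1 / 2 : ℂ) • (Y - Yᵀ))ᵀ = -((1 / 2 : ℂ) • (Y - Yᵀ))
    simp only [Matrix.transpose_smul, Matrix.transpose_sub, Matrix.transpose_transpose]
    rw [← smul_neg, neg_sub])

theorem subtype_skewP (n : ℕ) :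
    (soSub n).subtype ∘ₗ skewP n = (1 / 2 : ℂ) • (LinearMap.id - trM n) := rfl

theorem skewP_subtype (n : ℕ) : skewP n ∘ₗ (soSub n).subtype = LinearMap.id := by
  ext1 Y
  apply Subtype.ext
  have hY : (Y : Matrix (Fin n) (Fin n) ℂ)ᵀ = -Y := Y.2
  show (1 / 2 : ℂ) • ((Y : Matrix (Fin n) (Fin n) ℂ) - (Y : Matrix (Fin n) (Fin n) ℂ)ᵀ) = Y
  rw [hY, sub_neg_eq_add, ← two_smul ℂ, smul_smul]
  norm_num

theorem trace_restrict_eq {n : ℕ} {X : Matrix (Fin n) (Fin n) ℂ} (hX : Xᵀ = -X) :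
    LinearMap.trace ℂ ↥(soSub n) (((adM X).restrict (adM_mem_so hX)) ^ 6)
      = (1 / 2 : ℂ) * (LinearMap.trace ℂ _ (adM X ^ 6)
        - LinearMap.trace ℂ _ ((adM X ^ 6 : Module.End ℂ _) ∘ₗ trM n)) := by
  set g := ((adM X).restrict (adM_mem_so hX)) ^ 6 with hg
  have h1 : (soSub n).subtype ∘ₗ g = (adM X ^ 6 : Module.End ℂ _) ∘ₗ (soSub n).subtype := by
    ext1 Y
    simp only [hg, pow_succ, pow_zero, one_mul, LinearMap.comp_apply, Module.End.mul_apply]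
    rfl
  have h2 : g = (g ∘ₗ skewP n) ∘ₗ (soSub n).subtype := by
    rw [LinearMap.comp_assoc, skewP_subtype, LinearMap.comp_id]
  rw [h2, LinearMap.trace_comp_comm', ← LinearMap.comp_assoc, h1, LinearMap.comp_assoc,
    subtype_skewP, LinearMap.comp_smul, LinearMap.comp_sub, LinearMap.comp_id, map_smul, map_sub,
    smul_eq_mul]

theorem trace_odd {n : ℕ} {X : Matrix (Fin n) (Fin n) ℂ} (hX : Xᵀ = -X) {k : ℕ} (hk : Odd k) :
    (X ^ k).trace = 0 := by
  have h : (X ^ k).trace = -(X ^ k).trace := by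
    conv_lhs => rw [← Matrix.trace_transpose, Matrix.transpose_pow, hX, hk.neg_pow,
      Matrix.trace_neg]
  exact self_eq_neg.mp h

theorem trace_formula {n : ℕ} {X : Matrix (Fin n) (Fin n) ℂ} (hX : Xᵀ = -X) :
    LinearMap.trace ℂ ↥(soSub n) (((adM X).restrict (adM_mem_so hX)) ^ 6)
      = ((n : ℂ) - 32) * (X ^ 6).trace + 15 * (X ^ 2).trace * (X ^ 4).trace := by
  have e1 := trace_odd hX (k := 1) (by decide)
  have e3 := trace_odd hX (k := 3) (by decide)
  have e5 := trace_odd hX (k := 5) (by decide)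
  have t (a b : ℕ) (hb : Even b) : (X ^ a * (X ^ b)ᵀ).trace = (X ^ (a + b)).trace := by
    rw [Matrix.transpose_pow, hX, hb.neg_pow, pow_add]
  have todd (a b : ℕ) (hb : Odd b) : (X ^ a * (X ^ b)ᵀ).trace = -(X ^ (a + b)).trace := by
    rw [Matrix.transpose_pow, hX, hb.neg_pow, pow_add, mul_neg, Matrix.trace_neg]
  rw [trace_restrict_eq hX, adM_pow_six]
  simp only [LinearMap.add_comp, LinearMap.sub_comp, LinearMap.smul_comp, map_add, map_sub,
    map_smul, trace_sandM, trace_sandM_trM, smul_eq_mul]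
  rw [t 6 0 (by decide), todd 5 1 (by decide), t 4 2 (by decide), todd 3 3 (by decide),
    t 2 4 (by decide), todd 1 5 (by decide), t 0 6 (by decide), e1, e3, e5]
  simp only [pow_zero, Matrix.trace_one, Fintype.card_fin]
  norm_num
  ring

theorem exists_trace_ne (n : ℕ) (hn : 2 ≤ n) :
    ∃ X : Matrix (Fin n) (Fin n) ℂ, Xᵀ = -X ∧ (X ^ 6).trace ≠ 0 := by
  let a : Fin n := ⟨0, by omega⟩
  let b : Fin n := ⟨1, by omega⟩
  have hab : a ≠ b := by simp [a, b]
  have hba : b ≠ a := hab.symm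
  let X : Matrix (Fin n) (Fin n) ℂ := Matrix.single a b 1 - Matrix.single b a 1
  have h2 : X ^ 2 = -(Matrix.single a a 1 + Matrix.single b b 1) := by
    simp only [X, pow_two, sub_mul, mul_sub, Matrix.single_mul_single_same,
      Matrix.single_mul_single_of_ne _ _ _ _ hab, Matrix.single_mul_single_of_ne _ _ _ _ hba]
    simp
    abel
  have h6 : X ^ 6 = -(Matrix.single a a 1 + Matrix.single b b 1) := by
    have : X ^ 6 = X ^ 2 * X ^ 2 * X ^ 2 := by rw [← pow_add, ← pow_add]
    rw [this, h2]
    simp [mul_add, add_mul, hab, hba]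
  refine ⟨X, ?_, ?_⟩
  · simp [X]
  · rw [h6]
    simp [Matrix.trace_single_eq_same]

/-- For `n ≥ 2`, the identity `Tr_ad((ad X)⁶) = 15·Tr(X²)·Tr(X⁴)` for all skew-symmetric
`X` holds if and only if `n = 32`. -/
theorem so_sextic_identity_iff (n : ℕ) (hn : 2 ≤ n) :
    (∀ (X : Matrix (Fin n) (Fin n) ℂ) (hX : Xᵀ = -X),
        LinearMap.trace ℂ ↥(soSub n) (((adM X).restrict (adM_mem_so hX)) ^ 6)
          = 15 * (X ^ 2).trace * (X ^ 4).trace) ↔ n = 32 := by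
  constructor
  · intro h
    obtain ⟨X, hX, h6⟩ := exists_trace_ne n hn
    have h1 := h X hX
    rw [trace_formula hX, add_eq_right, mul_eq_zero, or_iff_left h6, sub_eq_zero] at h1
    exact_mod_cast h1
  · rintro rfl X hX
    rw [trace_formula hX]
    norm_num

end
end

section
/- Let n ≥ 1, let J be the standard 2n×2n symplectic matrix (block form [[0, −1],[1, 0]]), and let X be a 2n×2n complex matrix with Xᵀ·J = −J·X. Let D_X = X ⊗ 1 + 1 ⊗ X acting on ℂ^{2n} ⊗ ℂ^{2n}, and let Tr_ad denote the trace of (ad X)⁴ on the Lie subalgebra 𝔰𝔭(2n,ℂ) = {Y : Yᵀ·J = −J·Y}. Then 2·Tr_ad = Tr(D_X⁴) + 16·Tr(X⁴). Equivalently, writing Tr_{∧²}(X⁴) = Tr(D_X⁴) − Tr_ad for the trace of X⁴ on the exterior square of ℂ^{2n} (so that 𝔰𝔭(2n,ℂ) ≅ S²ℂ^{2n} carries the remaining trace), one has 2·Tr_{∧²}(X⁴) + 32·Tr(X⁴) = 2·Tr_ad. -/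
open Matrix

noncomputable section

/-- The subspace `𝔰𝔭(2n,ℂ)` of `2n×2n` complex matrices `Y` with `Yᵀ·J = −J·Y`,
where `J = [[0,−1],[1,0]]` is the standard symplectic matrix `Matrix.J`. -/
def spSub (n : ℕ) : Submodule ℂ (Matrix (Fin n ⊕ Fin n) (Fin n ⊕ Fin n) ℂ) where
  carrier := {Y | Yᵀ * Matrix.J (Fin n) ℂ = -(Matrix.J (Fin n) ℂ * Y)}
  add_mem' := by
    intro a b ha hb
    simp only [Set.mem_setOf_eq] at *
    rw [Matrix.transpose_add, Matrix.add_mul, ha, hb, Matrix.mul_add, neg_add]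
  zero_mem' := by simp
  smul_mem' := by
    intro c a ha
    simp only [Set.mem_setOf_eq] at *
    rw [Matrix.transpose_smul, Matrix.smul_mul, ha, Matrix.mul_smul, smul_neg]

theorem key_mul {n : ℕ} {J A B : Matrix (Fin n ⊕ Fin n) (Fin n ⊕ Fin n) ℂ}
    (hA : Aᵀ * J = -(J * A)) (hB : Bᵀ * J = -(J * B)) :
    (A * B)ᵀ * J = J * (B * A) := by
  rw [Matrix.transpose_mul, Matrix.mul_assoc, hA, Matrix.mul_neg, ← Matrix.mul_assoc, hB,
    Matrix.neg_mul, neg_neg, Matrix.mul_assoc]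

/-- For `X ∈ 𝔰𝔭(2n,ℂ)`, `ad X` preserves `𝔰𝔭(2n,ℂ)`. -/
theorem adM_mem_sp {n : ℕ} {X : Matrix (Fin n ⊕ Fin n) (Fin n ⊕ Fin n) ℂ}
    (hX : Xᵀ * Matrix.J (Fin n) ℂ = -(Matrix.J (Fin n) ℂ * X)) :
    ∀ Y ∈ spSub n, adM X Y ∈ spSub n := by
  intro Y hY
  have hY' : Yᵀ * Matrix.J (Fin n) ℂ = -(Matrix.J (Fin n) ℂ * Y) := hY
  show (adM X Y)ᵀ * Matrix.J (Fin n) ℂ = -(Matrix.J (Fin n) ℂ * adM X Y)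
  rw [adM_apply, Matrix.transpose_sub, Matrix.sub_mul, key_mul hX hY', key_mul hY' hX,
    Matrix.mul_sub, neg_sub]

/-- `D_X = X ⊗ 1 + 1 ⊗ X` acting on `ℂ^m ⊗ ℂ^m`. -/
def DX {m : Type*} [Fintype m] [DecidableEq m] (X : Matrix m m ℂ) :
    Module.End ℂ (TensorProduct ℂ (m → ℂ) (m → ℂ)) :=
  LinearMap.rTensor (m → ℂ) (Matrix.toLin' X) + LinearMap.lTensor (m → ℂ) (Matrix.toLin' X)

theorem trace_end_eq_sum {m : Type*} [Fintype m] [DecidableEq m]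
    (f : Module.End ℂ (Matrix m m ℂ)) :
    LinearMap.trace ℂ _ f = ∑ i, ∑ j, f (Matrix.single i j 1) i j := by
  rw [LinearMap.trace_eq_matrix_trace ℂ (Matrix.stdBasis ℂ m m), Matrix.trace,
    Fintype.sum_prod_type]
  refine Finset.sum_congr rfl fun i _ => Finset.sum_congr rfl fun j _ => ?_
  rw [Matrix.diag_apply, LinearMap.toMatrix_apply, Matrix.stdBasis_eq_single]
  simp [Matrix.stdBasis]

theorem trace_LR {m : Type*} [Fintype m] [DecidableEq m] (A B : Matrix m m ℂ) :
    LinearMap.trace ℂ _ (LinearMap.mulLeft ℂ A * LinearMap.mulRight ℂ B)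
      = A.trace * B.trace := by
  rw [trace_end_eq_sum]
  simp only [Module.End.mul_apply, LinearMap.mulLeft_apply, LinearMap.mulRight_apply]
  simp only [Matrix.trace, Matrix.diag, Finset.sum_mul_sum]
  refine Finset.sum_congr rfl fun i _ => Finset.sum_congr rfl fun j _ => ?_
  rw [← Matrix.mul_assoc, Matrix.mul_apply, Finset.sum_eq_single j]
  · simp
  · intro b _ hb
    simp [hb]
  · simp

/-- `Y ↦ J Yᵀ J`. -/
def sigM {m : Type*} [Fintype m] [DecidableEq m] (J : Matrix m m ℂ) :
    Module.End ℂ (Matrix m m ℂ) :=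
  LinearMap.mulLeft ℂ J * LinearMap.mulRight ℂ J * (Matrix.transposeLinearEquiv m m ℂ ℂ).toLinearMap

theorem sigM_apply {m : Type*} [Fintype m] [DecidableEq m] (J Y : Matrix m m ℂ) :
    sigM J Y = J * Yᵀ * J := by
  simp [sigM, Matrix.mul_assoc]

theorem trace_sig_LR {m : Type*} [Fintype m] [DecidableEq m] (J A B : Matrix m m ℂ) :
    LinearMap.trace ℂ _ (sigM J * (LinearMap.mulLeft ℂ A * LinearMap.mulRight ℂ B))
      = (J * Bᵀ * (Jᵀ * A)).trace := by
  rw [trace_end_eq_sum]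
  simp only [Module.End.mul_apply, LinearMap.mulLeft_apply, LinearMap.mulRight_apply, sigM_apply]
  rw [Matrix.trace]
  refine Finset.sum_congr rfl fun i _ => ?_
  rw [Matrix.diag_apply, Matrix.mul_apply]
  refine Finset.sum_congr rfl fun j _ => ?_
  have : J * (A * (Matrix.single i j 1 * B))ᵀ * J
      = (J * Bᵀ) * Matrix.single j i 1 * (Jᵀ * A)ᵀ := by
    simp [Matrix.transpose_mul, Matrix.mul_assoc]
  rw [this, Matrix.mul_apply, Finset.sum_eq_single i]
  · simp
  · intro b _ hb
    simp [hb]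
  · simp

theorem adM_pow_four {m : Type*} [Fintype m] [DecidableEq m] (X : Matrix m m ℂ) :
    adM X ^ 4 = LinearMap.mulLeft ℂ (X ^ 4) * LinearMap.mulRight ℂ 1
      - (4 : ℂ) • (LinearMap.mulLeft ℂ (X ^ 3) * LinearMap.mulRight ℂ X)
      + (6 : ℂ) • (LinearMap.mulLeft ℂ (X ^ 2) * LinearMap.mulRight ℂ (X ^ 2))
      - (4 : ℂ) • (LinearMap.mulLeft ℂ X * LinearMap.mulRight ℂ (X ^ 3))
      + LinearMap.mulLeft ℂ 1 * LinearMap.mulRight ℂ (X ^ 4) := by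
  apply LinearMap.ext
  intro Y
  simp only [pow_succ, pow_zero, one_mul, Module.End.mul_apply, adM_apply, LinearMap.add_apply,
    LinearMap.sub_apply, LinearMap.smul_apply, LinearMap.mulLeft_apply, LinearMap.mulRight_apply,
    mul_one]
  simp only [mul_sub, sub_mul, mul_assoc]
  module

theorem trace_DX_pow_four {m : Type*} [Fintype m] [DecidableEq m] (X : Matrix m m ℂ) :
    LinearMap.trace ℂ (TensorProduct ℂ (m → ℂ) (m → ℂ)) (DX X ^ 4)
      = 2 * (X ^ 4).trace * (1 : Matrix m m ℂ).trace + 8 * (X ^ 3).trace * X.trace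
        + 6 * (X ^ 2).trace ^ 2 := by
  have h : DX X ^ 4 = TensorProduct.map (Matrix.toLin' (X ^ 4)) (Matrix.toLin' 1)
      + (4 : ℂ) • TensorProduct.map (Matrix.toLin' (X ^ 3)) (Matrix.toLin' X)
      + (6 : ℂ) • TensorProduct.map (Matrix.toLin' (X ^ 2)) (Matrix.toLin' (X ^ 2))
      + (4 : ℂ) • TensorProduct.map (Matrix.toLin' X) (Matrix.toLin' (X ^ 3))
      + TensorProduct.map (Matrix.toLin' 1) (Matrix.toLin' (X ^ 4)) := by
    apply TensorProduct.ext'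
    intro x y
    simp only [DX, pow_succ, pow_zero, one_mul, Module.End.mul_apply, LinearMap.add_apply,
      LinearMap.smul_apply, LinearMap.rTensor_tmul, LinearMap.lTensor_tmul, map_add,
      TensorProduct.map_tmul, Matrix.toLin'_mul, LinearMap.comp_apply, Matrix.toLin'_one,
      LinearMap.id_apply]
    module
  rw [h]
  simp only [map_add, map_smul, LinearMap.trace_tensorProduct', Matrix.trace_toLin'_eq, smul_eq_mul]
  ring

theorem trace_adM_pow_four {m : Type*} [Fintype m] [DecidableEq m] (X : Matrix m m ℂ) :
    LinearMap.trace ℂ _ (adM X ^ 4)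
      = 2 * (X ^ 4).trace * (1 : Matrix m m ℂ).trace - 8 * (X ^ 3).trace * X.trace
        + 6 * (X ^ 2).trace ^ 2 := by
  rw [adM_pow_four]
  simp only [map_add, map_sub, map_smul, trace_LR, smul_eq_mul]
  ring

theorem trace_sig_adM_pow_four {m : Type*} [Fintype m] [DecidableEq m] (J X : Matrix m m ℂ)
    (hJt : Jᵀ = -J) (hJ : J * J = -1) (hX : Xᵀ * J = -(J * X)) :
    LinearMap.trace ℂ _ (sigM J * adM X ^ 4) = 16 * (X ^ 4).trace := by
  have hc : ∀ Y : Matrix m m ℂ, Xᵀ * (J * Y) = -(J * (X * Y)) := fun Y => by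
    rw [← mul_assoc, hX, neg_mul, mul_assoc]
  have hJ2 : ∀ Y : Matrix m m ℂ, J * (J * Y) = -Y := fun Y => by
    rw [← mul_assoc, hJ, neg_mul, one_mul]
  rw [adM_pow_four]
  simp only [mul_add, mul_sub, mul_smul_comm, map_add, map_sub, map_smul, trace_sig_LR, smul_eq_mul]
  simp only [hJt, pow_succ, pow_zero, one_mul, Matrix.transpose_mul, mul_assoc, hc, hJ2, hJ, hX,
    neg_mul, mul_neg, neg_neg, Matrix.transpose_one, mul_one, Matrix.trace_neg]
  ring

theorem trace_X_zero {m : Type*} [Fintype m] [DecidableEq m] (J X : Matrix m m ℂ)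
    (hJ : J * J = -1) (hX : Xᵀ * J = -(J * X)) : X.trace = 0 := by
  have h1 : X = J * (Xᵀ * J) := by
    rw [hX, mul_neg, ← mul_assoc, hJ]; simp
  have h2 : X.trace = -X.trace := by
    conv_lhs => rw [h1, Matrix.trace_mul_comm, mul_assoc, hJ]
    simp
  linear_combination h2 / 2

theorem sigM_mem (n : ℕ) (Y : Matrix (Fin n ⊕ Fin n) (Fin n ⊕ Fin n) ℂ) :
    Y ∈ spSub n ↔ sigM (Matrix.J (Fin n) ℂ) Y = Y := by
  have hJ : Matrix.J (Fin n) ℂ * Matrix.J (Fin n) ℂ = -1 := Matrix.J_squared _ _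
  change Yᵀ * Matrix.J (Fin n) ℂ = -(Matrix.J (Fin n) ℂ * Y) ↔ _
  rw [sigM_apply]
  constructor
  · intro h
    rw [mul_assoc, h, mul_neg, ← mul_assoc, hJ]; simp
  · intro h
    conv_rhs => rw [← h, mul_assoc, ← mul_assoc, hJ]
    simp

theorem sigM_invol (n : ℕ) (Y : Matrix (Fin n ⊕ Fin n) (Fin n ⊕ Fin n) ℂ) :
    sigM (Matrix.J (Fin n) ℂ) (sigM (Matrix.J (Fin n) ℂ) Y) = Y := by
  have hJ : Matrix.J (Fin n) ℂ * Matrix.J (Fin n) ℂ = -1 := Matrix.J_squared _ _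
  have hJ2 : ∀ Y, Matrix.J (Fin n) ℂ * (Matrix.J (Fin n) ℂ * Y) = -Y := fun Y => by
    rw [← mul_assoc, hJ, neg_mul, one_mul]
  simp only [sigM_apply, Matrix.transpose_mul, Matrix.J_transpose, Matrix.transpose_transpose]
  simp [mul_assoc, hJ, hJ2]

theorem trace_ad_sp (n : ℕ) (X : Matrix (Fin n ⊕ Fin n) (Fin n ⊕ Fin n) ℂ)
    (hX : Xᵀ * Matrix.J (Fin n) ℂ = -(Matrix.J (Fin n) ℂ * X)) :
    2 * LinearMap.trace ℂ ↥(spSub n) (((adM X).restrict (adM_mem_sp hX)) ^ 4)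
      = LinearMap.trace ℂ _ (adM X ^ 4)
        + LinearMap.trace ℂ _ (sigM (Matrix.J (Fin n) ℂ) * adM X ^ 4) := by
  set g : Module.End ℂ (Matrix (Fin n ⊕ Fin n) (Fin n ⊕ Fin n) ℂ) :=
    (1 / 2 : ℂ) • (adM X ^ 4 + sigM (Matrix.J (Fin n) ℂ) * adM X ^ 4) with hg
  have hgm : ∀ Y, g Y ∈ spSub n := by
    intro Y
    rw [sigM_mem]
    simp only [hg, LinearMap.smul_apply, LinearMap.add_apply, Module.End.mul_apply, map_smul,
      map_add, sigM_invol]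
    rw [add_comm]
  have hpow : ∀ Y ∈ spSub n, (adM X ^ 4) Y ∈ spSub n := by
    intro Y hY
    simp only [pow_succ, pow_zero, one_mul, Module.End.mul_apply]
    exact adM_mem_sp hX _ (adM_mem_sp hX _ (adM_mem_sp hX _ (adM_mem_sp hX _ hY)))
  have hr : ((adM X).restrict (adM_mem_sp hX)) ^ 4 = g.restrict (fun Y _ => hgm Y) := by
    apply LinearMap.ext
    intro Y
    apply Subtype.ext
    have h1 : ((((adM X).restrict (adM_mem_sp hX)) ^ 4) Y : Matrix _ _ ℂ) = (adM X ^ 4) Y := by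
      simp only [pow_succ, pow_zero, one_mul, Module.End.mul_apply, LinearMap.restrict_coe_apply]
    rw [h1, LinearMap.restrict_coe_apply]
    simp only [hg, LinearMap.smul_apply, LinearMap.add_apply, Module.End.mul_apply]
    rw [(sigM_mem n _).1 (hpow _ Y.2)]
    module
  rw [hr, LinearMap.trace_restrict_eq_of_forall_mem _ _ hgm, hg, map_smul, map_add, smul_eq_mul]
  ring

/-- For `X ∈ 𝔰𝔭(2n,ℂ)`: `2·Tr_ad = Tr(D_X⁴) + 16·Tr(X⁴)`, where `Tr_ad` is the trace of
`(ad X)⁴` on `𝔰𝔭(2n,ℂ)`; equivalently, writing `Tr_{∧²}(X⁴) = Tr(D_X⁴) − Tr_ad`, one has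
`2·Tr_{∧²}(X⁴) + 32·Tr(X⁴) = 2·Tr_ad`. -/
theorem D5_brane_anomaly_sp (n : ℕ) (hn : 1 ≤ n) (X : Matrix (Fin n ⊕ Fin n) (Fin n ⊕ Fin n) ℂ)
    (hX : Xᵀ * Matrix.J (Fin n) ℂ = -(Matrix.J (Fin n) ℂ * X)) :
    2 * LinearMap.trace ℂ ↥(spSub n) (((adM X).restrict (adM_mem_sp hX)) ^ 4)
      = LinearMap.trace ℂ (TensorProduct ℂ ((Fin n ⊕ Fin n) → ℂ) ((Fin n ⊕ Fin n) → ℂ))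
          (DX X ^ 4)
        + 16 * (X ^ 4).trace ∧
    2 * (LinearMap.trace ℂ (TensorProduct ℂ ((Fin n ⊕ Fin n) → ℂ) ((Fin n ⊕ Fin n) → ℂ))
            (DX X ^ 4)
          - LinearMap.trace ℂ ↥(spSub n) (((adM X).restrict (adM_mem_sp hX)) ^ 4))
      + 32 * (X ^ 4).trace
      = 2 * LinearMap.trace ℂ ↥(spSub n) (((adM X).restrict (adM_mem_sp hX)) ^ 4) := by
  have hJ : Matrix.J (Fin n) ℂ * Matrix.J (Fin n) ℂ = -1 := Matrix.J_squared _ _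
  have h1 := trace_ad_sp n X hX
  rw [trace_sig_adM_pow_four _ X (Matrix.J_transpose _ _) hJ hX, trace_adM_pow_four,
    trace_X_zero _ X hJ hX] at h1
  have h2 := trace_DX_pow_four X
  rw [trace_X_zero _ X hJ hX] at h2
  constructor
  · rw [h1, h2]; ring
  · linear_combination 2 * h2 - 2 * h1

end
end
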